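/- arXiv:1401.3636 — 2 statements merged into one kernel-verified Lean document; each statement's English description precedes it below -/
import Mathlib

section
/- Let x be a real number and let a, d be complex numbers with d ≠ 0, 4a+2 ≠ 0, such that a, a+1/2, a+1, a+3/2, a+2 and d are not nonpositive integers or zero. Then Σ_{k=0}^∞ (a/2)_k ((a+1)/2)_k (d+1)_k (−x²)^k / ((a+1/2)_k (a+1)_k (d)_k k!) = Σ_{k=0}^∞ (a/2)_k ((a+1)/2)_k (−x²)^k / ((a)_k (a+1/2)_k k!) + (x² (1 − a/d)/(4a+2)) · Σ_{k=0}^∞ (a/2+1)_k (a/2+3/2)_k (−x²)^k / ((a+3/2)_k (a+2)_k k!). -/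
/-- The Pochhammer symbol `(a)_k = a (a+1) ⋯ (a+k-1)`. -/
noncomputable def poch (a : ℂ) (k : ℕ) : ℂ := Polynomial.eval a (ascPochhammer ℂ k)

/-!
The identity holds term by term up to a shift of index, for any numerator parameters. Let `u_k` be
the terms of the series with denominator parameter `c + 1` and without the pair `d + 1`, `d`. Since
`(t + 1)_k / (t)_k = 1 + k / t`, inserting that pair multiplies `u_k` by `1 + k / d`, and lowering
`c + 1` to `c` multiplies it by `1 + k / c`. The two series thus differ by
`(1 / d - 1 / c) ∑ k u_k`, and `(k + 1) u_{k+1}` is, up to a factor independent of `k`, the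
`k`-th term of the series of `u` with every parameter raised by one.
-/

open Complex Multiset

theorem mul_poch_add_one (t : ℂ) (k : ℕ) : t * poch (t + 1) k = poch t (k + 1) := by
  simp [poch, ascPochhammer_succ_left]

theorem poch_mul_add (t : ℂ) (k : ℕ) : poch t k * (t + k) = poch t (k + 1) :=
  (ascPochhammer_succ_eval k t).symm

theorem poch_ne_zero {t : ℂ} (ht : ∀ n : ℕ, t ≠ -n) (k : ℕ) : poch t k ≠ 0 := by
  rw [poch, Ne, ascPochhammer_eval_eq_zero_iff]
  rintro ⟨n, -, hn⟩
  exact ht n (neg_eq_iff_eq_neg.mp hn.symm)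

theorem poch_add_one_div_poch {t : ℂ} (ht : ∀ n : ℕ, t ≠ -n) (k : ℕ) :
    poch (t + 1) k / poch t k = 1 + k / t := by
  have ht0 : t ≠ 0 := by simpa using ht 0
  have hpoch := poch_ne_zero ht k
  field_simp
  rw [mul_poch_add_one, poch_mul_add]

theorem add_one_ne_neg_natCast {t : ℂ} (ht : ∀ n : ℕ, t ≠ -n) (n : ℕ) : t + 1 ≠ -n := by
  intro h
  apply ht (n + 1)
  push_cast
  linear_combination h

/-- The `k`-th term of the generalized hypergeometric series `ₚF_q(A; B; z)`. The series does not
depend on the order of its parameters, so they are collected in multisets. -/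
noncomputable def hypergeometricTerm (A B : Multiset ℂ) (z : ℂ) (k : ℕ) : ℂ :=
  (A.map (poch · k)).prod * z ^ k / ((B.map (poch · k)).prod * k.factorial)

section HypergeometricTerm

variable {s t : ℂ} (A B : Multiset ℂ) (z : ℂ) (k : ℕ)

theorem hypergeometricTerm_cons_cons :
    hypergeometricTerm (s ::ₘ A) (t ::ₘ B) z k =
      poch s k / poch t k * hypergeometricTerm A B z k := by
  simp only [hypergeometricTerm, map_cons, prod_cons, mul_assoc, mul_div_mul_comm]

theorem hypergeometricTerm_add_one_cons_cons (ht : ∀ n : ℕ, t ≠ -n) :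
    hypergeometricTerm ((t + 1) ::ₘ A) (t ::ₘ B) z k =
      (1 + k / t) * hypergeometricTerm A B z k := by
  rw [hypergeometricTerm_cons_cons, poch_add_one_div_poch ht]

theorem hypergeometricTerm_cons_right (ht : ∀ n : ℕ, t ≠ -n) :
    hypergeometricTerm A (t ::ₘ B) z k =
      (1 + k / t) * hypergeometricTerm A ((t + 1) ::ₘ B) z k := by
  rw [← hypergeometricTerm_add_one_cons_cons _ _ _ _ ht, cons_swap, hypergeometricTerm_cons_cons,
    div_self (poch_ne_zero (add_one_ne_neg_natCast ht) k), one_mul]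

theorem add_one_mul_hypergeometricTerm_add_one :
    (k + 1 : ℂ) * hypergeometricTerm A B z (k + 1) =
      z * A.prod / B.prod * hypergeometricTerm (A.map (· + 1)) (B.map (· + 1)) z k := by
  have prod_poch_succ (S : Multiset ℂ) : (S.map (poch · (k + 1))).prod =
      S.prod * ((S.map (· + 1)).map (poch · k)).prod := by
    simp only [← mul_poch_add_one, prod_map_mul, map_id', map_map, Function.comp_apply]
  have hk : (k + 1 : ℂ) ≠ 0 := by exact_mod_cast k.succ_ne_zero
  simp only [hypergeometricTerm, prod_poch_succ, Nat.factorial_succ, pow_succ']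
  push_cast
  field_simp

variable {B}

theorem hypergeometricTerm_eq_regularizedHGFunCoeff (hB : ∀ b ∈ B, ∀ n : ℕ, b ≠ -n) :
    hypergeometricTerm A B z k = (B.map Gamma).prod * (regularizedHGFunCoeff A B k * z ^ k) := by
  have prod_Gamma_add : (B.map fun b => Gamma (b + k)).prod =
      (B.map Gamma).prod * (B.map (poch · k)).prod := by
    rw [← prod_map_mul]
    refine congrArg prod (map_congr rfl fun b hb => ?_)
    rw [poch, ← Gamma_add_nat_div_Gamma_eq b (hB b hb), mul_div_cancel₀ _ (Gamma_ne_zero (hB b hb))]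
  have prod_Gamma_ne_zero : (B.map Gamma).prod ≠ 0 := by
    simpa [prod_eq_zero_iff] using fun b hb => Gamma_ne_zero (hB b hb)
  rw [regularizedHGFunCoeff, prod_Gamma_add, hypergeometricTerm]
  simp only [poch]
  field_simp

variable {A}

theorem summable_hypergeometricTerm (hcard : A.card ≤ B.card) (hB : ∀ b ∈ B, ∀ n : ℕ, b ≠ -n) :
    Summable (hypergeometricTerm A B z) := by
  have hz : z ∈ Metric.eball 0 (regularizedHGFunSeries A B).radius := by
    simp [radius_regularizedHGFunSeries_eq_top hcard]
  have hsum := ((regularizedHGFunSeries A B).summable hz).mul_left (B.map Gamma).prod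
  refine hsum.congr fun k => ?_
  simp [hypergeometricTerm_eq_regularizedHGFunCoeff A z k hB, mul_comm (z ^ k)]

theorem hasSum_natCast_mul_hypergeometricTerm (hcard : A.card ≤ B.card)
    (hB : ∀ b ∈ B, ∀ n : ℕ, b ≠ -n) :
    HasSum (fun k : ℕ => k * hypergeometricTerm A B z k)
      (z * A.prod / B.prod * ∑' k, hypergeometricTerm (A.map (· + 1)) (B.map (· + 1)) z k) := by
  have hB' : ∀ b ∈ B.map (· + 1), ∀ n : ℕ, b ≠ -(n : ℂ) := by
    simpa only [forall_mem_map_iff] using fun b hb => add_one_ne_neg_natCast (hB b hb)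
  have hshift := (summable_hypergeometricTerm (A := A.map (· + 1)) z (by simpa) hB').hasSum
  rw [← hasSum_nat_add_iff' 1]
  simpa [add_one_mul_hypergeometricTerm_add_one] using hshift.mul_left (z * A.prod / B.prod)

end HypergeometricTerm

theorem contiguous_3F3_general {A B : Multiset ℂ} {c d : ℂ} (hcard : A.card ≤ B.card + 1)
    (hB : ∀ b ∈ B, ∀ n : ℕ, b ≠ -n) (hc : ∀ n : ℕ, c ≠ -n) (hd : ∀ n : ℕ, d ≠ -n) (z : ℂ) :
    HasSum (hypergeometricTerm ((d + 1) ::ₘ A) (d ::ₘ (c + 1) ::ₘ B) z)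
      ((∑' k, hypergeometricTerm A (c ::ₘ B) z k) +
        (1 / d - 1 / c) * (z * A.prod / ((c + 1) * B.prod)) *
          ∑' k, hypergeometricTerm (A.map (· + 1)) ((c + 2) ::ₘ B.map (· + 1)) z k) := by
  have hlow : Summable (hypergeometricTerm A (c ::ₘ B) z) :=
    summable_hypergeometricTerm z (by simpa) (forall_mem_cons.mpr ⟨hc, hB⟩)
  have hraised := hasSum_natCast_mul_hypergeometricTerm (A := A) (B := (c + 1) ::ₘ B) z
    (by simpa) (forall_mem_cons.mpr ⟨add_one_ne_neg_natCast hc, hB⟩)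
  rw [map_cons, prod_cons, add_assoc c, one_add_one_eq_two] at hraised
  rw [mul_assoc]
  refine (hlow.hasSum.add (hraised.mul_left (1 / d - 1 / c))).congr_fun fun k => ?_
  rw [hypergeometricTerm_add_one_cons_cons _ _ _ _ hd, hypergeometricTerm_cons_right _ _ _ _ hc]
  ring

theorem contiguous_3F3_coeff_eq {a : ℂ} (ha : a ≠ 0) (ha' : a + 1 ≠ 0) (d z : ℂ) :
    (1 / d - 1 / a) * (-z * (a / 2 * ((a + 1) / 2)) / ((a + 1) * (a + 1 / 2))) =
      z * (1 - a / d) / (4 * a + 2) := by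
  rw [show a + 1 / 2 = (4 * a + 2) / 4 by ring]
  field_simp
  ring

/-- Contiguous relation for the `₃F₃` in Example (d):
`₃F₃(a/2, (a+1)/2, d+1; a+1/2, a+1, d; -x²)
  = ₂F₂(a/2, (a+1)/2; a, a+1/2; -x²)
    + (x²(1-a/d)/(4a+2)) ₂F₂(a/2+1, a/2+3/2; a+3/2, a+2; -x²)`. -/
theorem contiguous_3F3
    (x : ℝ) (a d : ℂ)
    (hd0 : d ≠ 0)
    (h4a2 : 4 * a + 2 ≠ 0)
    (ha : ∀ n : ℕ, a ≠ -(n : ℂ))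
    (ha1 : ∀ n : ℕ, a + 1 / 2 ≠ -(n : ℂ))
    (hap1 : ∀ n : ℕ, a + 1 ≠ -(n : ℂ))
    (ha3 : ∀ n : ℕ, a + 3 / 2 ≠ -(n : ℂ))
    (hap2 : ∀ n : ℕ, a + 2 ≠ -(n : ℂ))
    (hd : ∀ n : ℕ, d ≠ -(n : ℂ)) :
    ∑' k : ℕ, poch (a / 2) k * poch ((a + 1) / 2) k * poch (d + 1) k *
        (-(x : ℂ) ^ 2) ^ k /
        (poch (a + 1 / 2) k * poch (a + 1) k * poch d k * (Nat.factorial k : ℂ))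
      = (∑' k : ℕ, poch (a / 2) k * poch ((a + 1) / 2) k * (-(x : ℂ) ^ 2) ^ k /
            (poch a k * poch (a + 1 / 2) k * (Nat.factorial k : ℂ)))
        + ((x : ℂ) ^ 2 * (1 - a / d) / (4 * a + 2)) *
          ∑' k : ℕ, poch (a / 2 + 1) k * poch (a / 2 + 3 / 2) k * (-(x : ℂ) ^ 2) ^ k /
            (poch (a + 3 / 2) k * poch (a + 2) k * (Nat.factorial k : ℂ)) := by
  have hsum := (contiguous_3F3_general (A := {a / 2, (a + 1) / 2}) (B := {a + 1 / 2}) le_rfl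
    (by simpa using ha1) ha hd (-(x : ℂ) ^ 2)).tsum_eq
  have half_add_one : (a + 1) / 2 + 1 = a / 2 + 3 / 2 := by ring
  have add_half_add_one : a + 1 / 2 + 1 = a + 3 / 2 := by ring
  rw [← contiguous_3F3_coeff_eq (by simpa using ha 0) (by simpa using hap1 0)]
  simpa only [hypergeometricTerm, insert_eq_cons, map_cons, map_singleton, prod_cons,
    prod_singleton, half_add_one, add_half_add_one, mul_comm, mul_left_comm, mul_assoc] using hsum
end

section
/- Let r be a positive integer, m_1, …, m_r positive integers with m := m_1 + ⋯ + m_r, and let a, c, d_1, …, d_r be complex numbers with Re(c − a) > m, such that c and c − a are not nonpositive integers or zero, each d_i is not a nonpositive integer or zero, and (1+a−c)_k ≠ 0 for 1 ≤ k ≤ m. Define C_k := ((−1)^k / k!) · Σ_{j=0}^k (−k)_j ∏_{i=1}^r (d_i+m_i)_j / (∏_{i=1}^r (d_i)_j · j!) for 0 ≤ k ≤ m. Then Σ_{k=1}^∞ (a)_k ∏_{i=1}^r (d_i+m_i)_k / ((c)_k ∏_{i=1}^r (d_i)_k · k) = ψ(c) − ψ(c−a) + Σ_{k=1}^m (−1)^k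 (a)_k (k−1)! C_k / (1+a−c)_k. -/
/-- The digamma function `ψ(z) = Γ'(z)/Γ(z)`. -/
noncomputable def digamma (z : ℂ) : ℂ := deriv Complex.Gamma z / Complex.Gamma z

/-! Everything rests on Gauss's theorem `₂F₁(a, b; c; 1) = Γ(c) Γ(c-a-b) / (Γ(c-a) Γ(c-b))`,
obtained by telescoping the contiguous relation between `c` and `c + 1`, iterating it, and letting
the lower parameter tend to infinity. Differentiating Gauss's theorem in `b` at `b = 0` gives
Ramanujan's Entry 9, `∑ (a)ₖ / ((c)ₖ k) = ψ(c) - ψ(c-a)`. The extra factor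
`∏ (dᵢ+mᵢ)ₖ / (dᵢ)ₖ = ∏ (dᵢ+k)_{mᵢ} / (dᵢ)_{mᵢ}` is a polynomial in `k` of degree at most `m` with
value `1` at `k = 0`, and its Newton coefficients are the `Cₖ`. Its constant term reproduces
Entry 9; each of the other falling factorials cancels the `k` in the denominator and leaves a series
that Gauss's theorem sums again. -/

open Filter Topology Asymptotics
open Complex (Gamma GammaSeq)
open scoped Nat fwdDiff

section Pochhammer

theorem poch_zero (s : ℂ) : poch s 0 = 1 := by simp [poch]

theorem poch_succ (s : ℂ) (n : ℕ) : poch s (n + 1) = poch s n * (s + n) :=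
  ascPochhammer_succ_eval n s

theorem poch_eq_prod (s : ℂ) (n : ℕ) : poch s n = ∏ j ∈ Finset.range n, (s + j) := by
  induction n with
  | zero => simp [poch_zero]
  | succ n ih => rw [poch_succ, ih, Finset.prod_range_succ]

theorem poch_add (s : ℂ) (n k : ℕ) : poch s (n + k) = poch s n * poch (s + n) k := by
  simp_rw [poch_eq_prod, Finset.prod_range_add, Nat.cast_add, add_assoc]

theorem poch_succ_left (s : ℂ) (n : ℕ) : poch s (n + 1) = s * poch (s + 1) n := by
  rw [add_comm n, poch_add, poch_succ, poch_zero]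
  simp

theorem poch_one (n : ℕ) : poch 1 n = n ! :=
  ascPochhammer_eval_one ℂ n

theorem poch_ne_zero_s17 {s : ℂ} (hs : ∀ n : ℕ, s ≠ -n) (n : ℕ) : poch s n ≠ 0 := by
  rw [poch_eq_prod, Finset.prod_ne_zero_iff]
  exact fun j _ h => hs j (eq_neg_of_add_eq_zero_left h)

theorem poch_neg_natCast (k j : ℕ) : poch (-k) j = (-1) ^ j * k.descFactorial j := by
  rw [poch, ascPochhammer_eval_neg_eq_descPochhammer, descPochhammer_eval_eq_descFactorial]

theorem poch_one_sub_sub_natCast (s : ℂ) (n : ℕ) : poch (1 - s - n) n = (-1) ^ n * poch s n := by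
  have h : 1 - s - n = -(s + n - 1) := by ring
  rw [poch, h, ascPochhammer_eval_neg_eq_descPochhammer, descPochhammer_eval_eq_ascPochhammer, poch]
  congr 3
  ring

theorem Gamma_add_natCast {s : ℂ} (hs : ∀ n : ℕ, s ≠ -n) (n : ℕ) :
    Gamma (s + n) = poch s n * Gamma s := by
  rw [poch, ← Complex.Gamma_add_nat_div_Gamma_eq s hs, div_mul_cancel₀ _ (Complex.Gamma_ne_zero hs)]

theorem norm_poch_le_norm_poch {s t : ℂ} (h : ∀ j : ℕ, ‖s + j‖ ≤ ‖t + j‖) (n : ℕ) :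
    ‖poch s n‖ ≤ ‖poch t n‖ := by
  simp_rw [poch_eq_prod, norm_prod]
  exact Finset.prod_le_prod (fun _ _ => norm_nonneg _) fun j _ => h j

theorem norm_le_norm_add_natCast {s : ℂ} (hs : 0 ≤ s.re) (N : ℕ) : ‖s‖ ≤ ‖s + N‖ := by
  rw [Complex.norm_def, Complex.norm_def]
  apply Real.sqrt_le_sqrt
  rw [Complex.normSq_apply, Complex.normSq_apply, Complex.add_re, Complex.add_im,
    Complex.natCast_re, Complex.natCast_im, add_zero]
  nlinarith [N.cast_nonneg (α := ℝ)]

theorem ne_neg_natCast_of_re_pos {s : ℂ} (hs : 0 < s.re) (n : ℕ) : s ≠ -n := by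
  rintro rfl
  rw [Complex.neg_re, Complex.natCast_re, neg_pos] at hs
  exact hs.not_ge n.cast_nonneg

theorem add_natCast_ne_neg_natCast {s : ℂ} (hs : ∀ n : ℕ, s ≠ -n) (N n : ℕ) : s + N ≠ -n := by
  intro h
  apply hs (N + n)
  push_cast
  linear_combination h

theorem tendsto_inv_poch_add_natCast (s : ℂ) (k : ℕ) :
    Tendsto (fun N : ℕ => (poch (s + N) k)⁻¹) atTop (𝓝 (0 ^ k)) := by
  have hfactor (j : ℕ) : Tendsto (fun N : ℕ => (s + N + j)⁻¹) atTop (𝓝 0) := by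
    refine tendsto_inv₀_cobounded.comp ?_
    simp_rw [add_right_comm s]
    exact (tendsto_const_add_cobounded (s + j)).comp tendsto_natCast_atTop_cobounded
  simpa [poch_eq_prod] using tendsto_finsetProd (Finset.range k) fun j _ => hfactor j

end Pochhammer

section GammaSeq

theorem GammaSeq_eq_div_poch (s : ℂ) (n : ℕ) : GammaSeq s n = n ^ s * n ! / poch s (n + 1) := by
  rw [GammaSeq, poch_eq_prod]

-- At a pole of `Γ` both sides are eventually `0`, so the statement needs no exception there.
theorem tendsto_inv_GammaSeq (s : ℂ) :
    Tendsto (fun n => (GammaSeq s n)⁻¹) atTop (𝓝 (Gamma s)⁻¹) := by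
  by_cases hs : ∃ k : ℕ, s = -k
  · rw [(Complex.Gamma_eq_zero_iff s).2 hs, inv_zero]
    obtain ⟨k, rfl⟩ := hs
    refine tendsto_const_nhds.congr' ?_
    filter_upwards [eventually_ge_atTop k] with n hn
    rw [GammaSeq_eq_div_poch, poch_neg_natCast, Nat.descFactorial_of_lt (by lia)]
    simp
  · push Not at hs
    exact (Complex.GammaSeq_tendsto_Gamma s).inv₀ (Complex.Gamma_ne_zero hs)

theorem poch_div_poch_eq_GammaSeq (a c : ℂ) {n : ℕ} (hn : n ≠ 0) :
    poch a (n + 1) / poch c (n + 1) = (GammaSeq a n)⁻¹ * GammaSeq c n * n ^ (a - c) := by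
  have hn' : (n : ℂ) ≠ 0 := Nat.cast_ne_zero.2 hn
  have ha : (n : ℂ) ^ a ≠ 0 := by simp [Complex.cpow_eq_zero_iff, hn]
  have hc : (n : ℂ) ^ c ≠ 0 := by simp [Complex.cpow_eq_zero_iff, hn]
  have hfac : (n ! : ℂ) ≠ 0 := Nat.cast_ne_zero.2 n.factorial_ne_zero
  rw [GammaSeq_eq_div_poch, GammaSeq_eq_div_poch, Complex.cpow_sub _ _ hn', inv_div]
  field_simp

theorem poch_div_poch_isBigO (a c : ℂ) :
    (fun n : ℕ => poch a (n + 1) / poch c (n + 1)) =O[atTop]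
      fun n : ℕ => (n : ℝ) ^ (a - c).re := by
  have hlim := (tendsto_inv_GammaSeq a).mul (Complex.GammaSeq_tendsto_Gamma c)
  have hpow : (fun n : ℕ => (n : ℂ) ^ (a - c)) =O[atTop] fun n : ℕ => (n : ℝ) ^ (a - c).re := by
    refine IsBigO.of_bound 1 ?_
    filter_upwards [eventually_gt_atTop 0] with n hn
    rw [one_mul, Complex.norm_natCast_cpow_of_pos hn]
    exact Real.le_norm_self _
  refine ((hlim.isBigO_one ℝ).mul hpow).congr' ?_ (by simp)
  filter_upwards [eventually_ne_atTop 0] with n hn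
  rw [poch_div_poch_eq_GammaSeq a c hn]

theorem tendsto_poch_mul_poch_div (a b c : ℂ) :
    Tendsto (fun N : ℕ => poch (c - a) N * poch (c - b) N / (poch c N * poch (c - a - b) N)) atTop
      (𝓝 (Gamma c * Gamma (c - a - b) / (Gamma (c - a) * Gamma (c - b)))) := by
  have hlim := ((tendsto_inv_GammaSeq (c - a)).mul (Complex.GammaSeq_tendsto_Gamma c)).mul
    ((tendsto_inv_GammaSeq (c - b)).mul (Complex.GammaSeq_tendsto_Gamma (c - a - b)))
  rw [← tendsto_add_atTop_iff_nat 1]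
  convert! hlim.congr' ?_ using 2
  · field_simp
  filter_upwards [eventually_ne_atTop 0] with n hn
  have hn' : (n : ℂ) ≠ 0 := Nat.cast_ne_zero.2 hn
  rw [mul_div_mul_comm, poch_div_poch_eq_GammaSeq _ _ hn, poch_div_poch_eq_GammaSeq _ _ hn]
  have hpow : (n : ℂ) ^ (c - a - c) * n ^ (c - b - (c - a - b)) = 1 := by
    rw [← Complex.cpow_add _ _ hn']
    ring_nf
    exact Complex.cpow_zero _
  linear_combination -(GammaSeq (c - a) n)⁻¹ * GammaSeq c n *
    ((GammaSeq (c - b) n)⁻¹ * GammaSeq (c - a - b) n) * hpow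

end GammaSeq

section Gauss

theorem ordinaryHypergeometricCoefficient_eq_poch (a b c : ℂ) (n : ℕ) :
    ordinaryHypergeometricCoefficient a b c n = poch a n / poch c n * (poch b n / poch 1 n) := by
  rw [ordinaryHypergeometricCoefficient, poch_one, poch, poch, poch]
  ring

theorem ordinaryHypergeometricCoefficient_succ (a b c : ℂ) (n : ℕ) :
    ordinaryHypergeometricCoefficient a b c (n + 1) =
      ordinaryHypergeometricCoefficient a b c n * ((a + n) * (b + n) / ((c + n) * (n + 1))) := by
  simp_rw [ordinaryHypergeometricCoefficient_eq_poch, poch_succ, mul_div_mul_comm,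
    add_comm (n : ℂ) 1]
  ring

theorem ordinaryHypergeometricCoefficient_isBigO (a b c : ℂ) :
    (fun n => ordinaryHypergeometricCoefficient a b c (n + 1)) =O[atTop]
      fun n : ℕ => (n : ℝ) ^ (-(c - a - b).re - 1) := by
  refine ((poch_div_poch_isBigO a c).mul (poch_div_poch_isBigO b 1)).congr'
    (by simp [ordinaryHypergeometricCoefficient_eq_poch]) ?_
  filter_upwards [eventually_gt_atTop 0] with n hn
  rw [← Real.rpow_add (Nat.cast_pos.2 hn)]
  congr 1
  simp only [Complex.sub_re, Complex.one_re]
  ring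

theorem summable_ordinaryHypergeometricCoefficient {a b c : ℂ} (h : 0 < (c - a - b).re) :
    Summable (ordinaryHypergeometricCoefficient a b c) := by
  rw [← summable_nat_add_iff 1]
  refine summable_of_isBigO_nat (Real.summable_nat_rpow.2 ?_)
    (ordinaryHypergeometricCoefficient_isBigO a b c)
  linarith

theorem tendsto_natCast_mul_ordinaryHypergeometricCoefficient {a b c : ℂ}
    (h : 0 < (c - a - b).re) :
    Tendsto (fun n : ℕ => n * ordinaryHypergeometricCoefficient a b c n) atTop (𝓝 0) := by
  rw [← tendsto_add_atTop_iff_nat 1]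
  have hsucc : (fun n : ℕ => ((n + 1 : ℕ) : ℂ)) =O[atTop] fun n : ℕ => (n : ℝ) := by
    refine IsBigO.of_bound 2 ?_
    filter_upwards [eventually_ge_atTop 1] with n hn
    rw [Complex.norm_natCast, Real.norm_natCast]
    exact_mod_cast (by lia : n + 1 ≤ 2 * n)
  refine (hsucc.mul (ordinaryHypergeometricCoefficient_isBigO a b c)).trans_tendsto ?_
  refine ((tendsto_rpow_neg_atTop h).comp tendsto_natCast_atTop_atTop).congr fun n => ?_
  rw [← Real.rpow_one_add' n.cast_nonneg (by linarith), add_sub_cancel, Function.comp_apply]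

theorem ordinaryHypergeometricCoefficient_telescope (a b : ℂ) {c : ℂ} (hc : ∀ n : ℕ, c ≠ -n)
    (n : ℕ) :
    c * (c - a - b) * ordinaryHypergeometricCoefficient a b c n -
        (c - a) * (c - b) * ordinaryHypergeometricCoefficient a b (c + 1) n =
      c * (n * ordinaryHypergeometricCoefficient a b c n) -
        c * ((n + 1 : ℕ) * ordinaryHypergeometricCoefficient a b c (n + 1)) := by
  have hcn : c + n ≠ 0 := fun h => hc n (eq_neg_of_add_eq_zero_left h)
  have hn : (n : ℂ) + 1 ≠ 0 := n.cast_add_one_ne_zero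
  have hshift : ordinaryHypergeometricCoefficient a b (c + 1) n =
      ordinaryHypergeometricCoefficient a b c n * (c / (c + n)) := by
    have hpoch : c * poch (c + 1) n = poch c n * (c + n) := by rw [← poch_succ_left, poch_succ]
    have hc0 : c ≠ 0 := by simpa using hc 0
    have hpoch_succ : poch (c + 1) n = poch c n * (c + n) / c := by
      rw [← hpoch, mul_div_cancel_left₀ _ hc0]
    simp_rw [ordinaryHypergeometricCoefficient_eq_poch, hpoch_succ]
    field_simp
  rw [hshift, ordinaryHypergeometricCoefficient_succ]
  push_cast
  field_simp
  ring

theorem tsum_ordinaryHypergeometricCoefficient_contiguous {a b c : ℂ} (hc : ∀ n : ℕ, c ≠ -n)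
    (h : 0 < (c - a - b).re) :
    c * (c - a - b) * ∑' n, ordinaryHypergeometricCoefficient a b c n =
      (c - a) * (c - b) * ∑' n, ordinaryHypergeometricCoefficient a b (c + 1) n := by
  have hsum := summable_ordinaryHypergeometricCoefficient h
  have hsum' : Summable (ordinaryHypergeometricCoefficient a b (c + 1)) := by
    refine summable_ordinaryHypergeometricCoefficient ?_
    simp only [Complex.sub_re, Complex.add_re, Complex.one_re] at h ⊢
    linarith
  have hpartial := ((hsum.hasSum.mul_left (c * (c - a - b))).sub
    (hsum'.hasSum.mul_left ((c - a) * (c - b)))).tendsto_sum_nat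
  simp_rw [ordinaryHypergeometricCoefficient_telescope a b hc,
    Finset.sum_range_sub' fun n : ℕ => c * (n * ordinaryHypergeometricCoefficient a b c n)]
    at hpartial
  have hboundary :=
    ((tendsto_natCast_mul_ordinaryHypergeometricCoefficient h).const_mul c).const_sub
      (c * ((0 : ℕ) * ordinaryHypergeometricCoefficient a b c 0))
  simpa [sub_eq_zero] using tendsto_nhds_unique hpartial hboundary

theorem tsum_ordinaryHypergeometricCoefficient_eq_mul_add_natCast {a b c : ℂ}
    (hc : ∀ n : ℕ, c ≠ -n) (h : 0 < (c - a - b).re) (N : ℕ) :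
    ∑' n, ordinaryHypergeometricCoefficient a b c n =
      poch (c - a) N * poch (c - b) N / (poch c N * poch (c - a - b) N) *
        ∑' n, ordinaryHypergeometricCoefficient a b (c + N) n := by
  induction N with
  | zero => simp [poch_zero]
  | succ N ih =>
    have hre : 0 < (c + N - a - b).re := by
      simp only [Complex.sub_re, Complex.add_re, Complex.natCast_re] at h ⊢
      linarith [N.cast_nonneg (α := ℝ)]
    have hcN := add_natCast_ne_neg_natCast hc N
    have hcN0 : c + N ≠ 0 := by simpa using hcN 0
    have hcab : c - a - b + N ≠ 0 := by
      intro h0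
      rw [show c + N - a - b = c - a - b + N by ring, h0] at hre
      exact lt_irrefl _ hre
    have hstep := tsum_ordinaryHypergeometricCoefficient_contiguous hcN hre
    rw [ih]
    simp_rw [poch_succ]
    have := poch_ne_zero_s17 hc N
    have := poch_ne_zero_s17 (ne_neg_natCast_of_re_pos h) N
    push_cast
    rw [← add_assoc]
    field_simp
    linear_combination poch (c - a) N * poch (c - b) N * hstep

theorem tendsto_tsum_ordinaryHypergeometricCoefficient_add_natCast {a b c : ℂ}
    (h : 0 < (c - a - b).re) :
    Tendsto (fun N : ℕ => ∑' n, ordinaryHypergeometricCoefficient a b (c + N) n) atTop (𝓝 1) := by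
  obtain ⟨M, hM⟩ := exists_nat_gt (-c.re)
  have hpos : 0 < (c + M).re := by
    rw [Complex.add_re, Complex.natCast_re]
    linarith
  have hbound : Summable (ordinaryHypergeometricCoefficient a b (c + M)) := by
    refine summable_ordinaryHypergeometricCoefficient ?_
    simp only [Complex.sub_re, Complex.add_re, Complex.natCast_re] at h ⊢
    linarith [M.cast_nonneg (α := ℝ)]
  have hterm (n : ℕ) : Tendsto (fun N : ℕ => ordinaryHypergeometricCoefficient a b (c + N) n) atTop
      (𝓝 ((n !⁻¹ : ℂ) * poch a n * poch b n * 0 ^ n)) :=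
    (tendsto_inv_poch_add_natCast c n).const_mul _
  have hlimit : ∑' n : ℕ, (n !⁻¹ : ℂ) * poch a n * poch b n * 0 ^ n = 1 := by
    rw [tsum_eq_single 0 fun n hn => by simp [hn]]
    simp [poch_zero]
  rw [← hlimit]
  refine tendsto_tsum_of_dominated_convergence hbound.norm hterm ?_
  filter_upwards [eventually_ge_atTop M] with N hN n
  obtain ⟨i, rfl⟩ := Nat.exists_eq_add_of_le hN
  have hpoch : ‖poch (c + M) n‖ ≤ ‖poch (c + (M + i : ℕ)) n‖ := by
    refine norm_poch_le_norm_poch (fun j => ?_) n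
    have hj : 0 ≤ (c + M + j).re := by
      rw [Complex.add_re, Complex.natCast_re]
      positivity
    rw [Nat.cast_add, ← add_assoc c, add_right_comm (c + M)]
    exact norm_le_norm_add_natCast hj i
  have hne := norm_pos_iff.2 (poch_ne_zero_s17 (ne_neg_natCast_of_re_pos hpos) n)
  simp_rw [ordinaryHypergeometricCoefficient_eq_poch, norm_mul, norm_div]
  gcongr

theorem hasSum_ordinaryHypergeometricCoefficient {a b c : ℂ} (hc : ∀ n : ℕ, c ≠ -n)
    (h : 0 < (c - a - b).re) :
    HasSum (ordinaryHypergeometricCoefficient a b c)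
      (Gamma c * Gamma (c - a - b) / (Gamma (c - a) * Gamma (c - b))) := by
  have hlim := (tendsto_poch_mul_poch_div a b c).mul
    (tendsto_tsum_ordinaryHypergeometricCoefficient_add_natCast h)
  simp_rw [← tsum_ordinaryHypergeometricCoefficient_eq_mul_add_natCast hc h, mul_one] at hlim
  rw [← tendsto_nhds_unique tendsto_const_nhds hlim]
  exact (summable_ordinaryHypergeometricCoefficient h).hasSum

end Gauss

section Digamma

/-- The coefficient of index `k + 1` of the hypergeometric series `₂F₁(a, b; c)`, divided by `b`
before evaluating, so that it is a polynomial in `b`. Its value at `b = 0` is the term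
`(a)ₖ₊₁ / ((c)ₖ₊₁ (k + 1))` of the series for `ψ(c) - ψ(c - a)`. -/
noncomputable def hypergeometricQuotient (a b c : ℂ) (k : ℕ) : ℂ :=
  poch a (k + 1) / poch c (k + 1) * (poch (b + 1) k / (k + 1)!)

theorem ordinaryHypergeometricCoefficient_succ_eq_mul (a b c : ℂ) (k : ℕ) :
    ordinaryHypergeometricCoefficient a b c (k + 1) = b * hypergeometricQuotient a b c k := by
  rw [hypergeometricQuotient, ordinaryHypergeometricCoefficient_eq_poch, poch_succ_left b, poch_one]
  ring

theorem hypergeometricQuotient_zero (a c : ℂ) (k : ℕ) :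
    hypergeometricQuotient a 0 c k = poch a (k + 1) / (poch c (k + 1) * (k + 1 : ℕ)) := by
  have hfac : (k ! : ℂ) ≠ 0 := Nat.cast_ne_zero.2 k.factorial_ne_zero
  rw [hypergeometricQuotient, zero_add, poch_one, Nat.factorial_succ, Nat.cast_mul]
  field_simp

theorem continuous_hypergeometricQuotient (a c : ℂ) (k : ℕ) :
    Continuous fun b => hypergeometricQuotient a b c k := by
  simp_rw [hypergeometricQuotient, poch_eq_prod (_ + 1)]
  fun_prop

theorem norm_hypergeometricQuotient_le {b : ℂ} {ε : ℝ} (hb : ‖b‖ ≤ ε) (a c : ℂ) (k : ℕ) :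
    ‖hypergeometricQuotient a b c k‖ ≤ ‖hypergeometricQuotient a ε c k‖ := by
  have hpoch : ‖poch (b + 1) k‖ ≤ ‖poch (ε + 1) k‖ := by
    refine norm_poch_le_norm_poch (fun j => ?_) k
    have hcast : (ε + 1 + j : ℂ) = (ε + (1 + j) : ℝ) := by push_cast; ring
    rw [hcast, Complex.norm_of_nonneg (by linarith [norm_nonneg b, j.cast_nonneg (α := ℝ)]),
      add_assoc]
    refine (norm_add_le _ _).trans (add_le_add hb (le_of_eq ?_))
    exact_mod_cast Complex.norm_natCast (1 + j)
  simp_rw [hypergeometricQuotient, norm_mul, norm_div]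
  gcongr

theorem hasSum_hypergeometricQuotient {a b c : ℂ} (hb : b ≠ 0) (hc : ∀ n : ℕ, c ≠ -n)
    (h : 0 < (c - a - b).re) :
    HasSum (hypergeometricQuotient a b c)
      (b⁻¹ * (Gamma c * Gamma (c - a - b) / (Gamma (c - a) * Gamma (c - b)) - 1)) := by
  have hgauss := (hasSum_nat_add_iff' 1).2 (hasSum_ordinaryHypergeometricCoefficient hc h)
  simpa [ordinaryHypergeometricCoefficient_succ_eq_mul, hb, ordinaryHypergeometricCoefficient]
    using hgauss.mul_left b⁻¹

theorem hasDerivAt_Gamma_mul_div_Gamma_mul {a c : ℂ} (hc : ∀ n : ℕ, c ≠ -n)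
    (hca : ∀ n : ℕ, c - a ≠ -n) :
    HasDerivAt (fun b => Gamma c * Gamma (c - a - b) / (Gamma (c - a) * Gamma (c - b)))
      (digamma c - digamma (c - a)) 0 := by
  have hΓ {s : ℂ} (hs : ∀ n : ℕ, s ≠ -n) :
      HasDerivAt (fun b => Gamma (s - b)) (-deriv Gamma s) 0 := by
    have h := (Complex.differentiableAt_Gamma s hs).hasDerivAt
    rw [← sub_zero s] at h
    simpa using h.comp_const_sub s 0
  have hc0 := Complex.Gamma_ne_zero hc
  have hca0 := Complex.Gamma_ne_zero hca
  convert! ((hΓ hca).const_mul (Gamma c)).div ((hΓ hc).const_mul (Gamma (c - a))) ?_ using 1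
  · simp only [digamma, sub_zero]
    field_simp
    ring
  · simp [hc0, hca0]

theorem exists_summable_norm_hypergeometricQuotient_le {a c : ℂ} (hc : ∀ n : ℕ, c ≠ -n)
    (h : 0 < (c - a).re) :
    ∃ u : ℕ → ℝ, Summable u ∧ ∀ᶠ b in 𝓝 0, ∀ k, ‖hypergeometricQuotient a b c k‖ ≤ u k := by
  obtain ⟨ε, hε, hεca⟩ := exists_between h
  have hre : 0 < (c - a - ε).re := by
    rw [Complex.sub_re, Complex.ofReal_re]
    linarith
  refine ⟨_, (hasSum_hypergeometricQuotient (Complex.ofReal_ne_zero.2 hε.ne') hc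
    hre).summable.norm, ?_⟩
  filter_upwards [Metric.closedBall_mem_nhds 0 hε] with b hb
  exact norm_hypergeometricQuotient_le (mem_closedBall_zero_iff.1 hb) a c

theorem hasSum_digamma_sub_digamma {a c : ℂ} (hc : ∀ n : ℕ, c ≠ -n) (h : 0 < (c - a).re) :
    HasSum (fun k : ℕ => poch a (k + 1) / (poch c (k + 1) * (k + 1 : ℕ)))
      (digamma c - digamma (c - a)) := by
  have hca := ne_neg_natCast_of_re_pos h
  obtain ⟨u, hu, hbound⟩ := exists_summable_norm_hypergeometricQuotient_le hc h
  have hcont : ContinuousAt (fun b => ∑' k, hypergeometricQuotient a b c k) 0 :=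
    tendsto_tsum_of_dominated_convergence hu
      (fun k => (continuous_hypergeometricQuotient a c k).tendsto 0) hbound
  have hslope : Tendsto (fun b => ∑' k, hypergeometricQuotient a b c k) (𝓝[≠] 0)
      (𝓝 (digamma c - digamma (c - a))) := by
    have hre : ∀ᶠ b in 𝓝 0, 0 < (c - a - b).re :=
      ContinuousAt.eventually_lt (by fun_prop) (by fun_prop) (by simpa using h)
    refine (hasDerivAt_iff_tendsto_slope.1 (hasDerivAt_Gamma_mul_div_Gamma_mul hc hca)).congr' ?_
    filter_upwards [eventually_nhdsWithin_of_eventually_nhds hre, self_mem_nhdsWithin] with b hb hb0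
    have hone : Gamma c * Gamma (c - a) / (Gamma (c - a) * Gamma c) = 1 := by
      rw [mul_comm, div_self (mul_ne_zero (Complex.Gamma_ne_zero hca) (Complex.Gamma_ne_zero hc))]
    rw [(hasSum_hypergeometricQuotient hb0 hc hb).tsum_eq, slope_def_field, sub_zero, sub_zero,
      sub_zero, hone, div_eq_inv_mul]
  rw [← tendsto_nhds_unique hcont.continuousWithinAt.tendsto hslope]
  simp_rw [← hypergeometricQuotient_zero]
  exact (hu.of_norm_bounded hbound.self_of_nhds).hasSum

end Digamma

section FallingFactorial

theorem poch_div_poch_add_mul_descFactorial (a c : ℂ) (p i : ℕ) :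
    poch a (i + p + 1) / poch c (i + p + 1) * (i + p).descFactorial p =
      poch a (p + 1) / poch c (p + 1) * p ! *
        ordinaryHypergeometricCoefficient (a + (p + 1 : ℕ)) (p + 1 : ℕ) (c + (p + 1 : ℕ)) i := by
  have hfac : (p ! : ℂ) * poch (p + 1 : ℕ) i = i ! * (i + p).descFactorial p := by
    rw [poch, ascPochhammer_nat_eq_natCast_ascFactorial]
    norm_cast
    rw [Nat.factorial_mul_ascFactorial, add_comm p,
      ← Nat.factorial_mul_descFactorial (Nat.le_add_left p i), Nat.add_sub_cancel]
  have hi : (i ! : ℂ) ≠ 0 := Nat.cast_ne_zero.2 i.factorial_ne_zero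
  have hdesc : ((i + p).descFactorial p : ℂ) = p ! * (poch (p + 1 : ℕ) i / i !) := by
    field_simp
    linear_combination -hfac
  rw [ordinaryHypergeometricCoefficient_eq_poch, poch_one, hdesc, add_assoc, add_comm i,
    poch_add a, poch_add c]
  ring

theorem hasSum_poch_div_poch_mul_descFactorial {a c : ℂ} (hc : ∀ n : ℕ, c ≠ -n) {p : ℕ}
    (h : p + 1 < (c - a).re) :
    HasSum (fun n : ℕ => poch a (n + 1) / poch c (n + 1) * n.descFactorial p)
      ((-1) ^ (p + 1) * poch a (p + 1) * p ! / poch (1 + a - c) (p + 1)) := by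
  have hpos : 0 < (c - a - (p + 1 : ℕ)).re := by
    rw [Complex.sub_re, Complex.natCast_re]
    push_cast
    linarith
  have hcp := add_natCast_ne_neg_natCast hc (p + 1)
  have hgauss := hasSum_ordinaryHypergeometricCoefficient (a := a + (p + 1 : ℕ))
    (b := (p + 1 : ℕ)) hcp (by rwa [add_sub_add_right_eq_sub])
  rw [← (add_left_injective p).hasSum_iff]
  · convert! hgauss.mul_left (poch a (p + 1) / poch c (p + 1) * p !) using 1
    · exact funext (poch_div_poch_add_mul_descFactorial a c p)
    have hreflect := poch_one_sub_sub_natCast (1 + a - c) (p + 1)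
    rw [show 1 - (1 + a - c) = c - a by ring] at hreflect
    have hΓ := Gamma_add_natCast (ne_neg_natCast_of_re_pos hpos) (p + 1)
    rw [sub_add_cancel, hreflect] at hΓ
    have hpoch := poch_ne_zero_s17 hc (p + 1)
    have hΓc := Complex.Gamma_ne_zero hc
    have hΓca := Complex.Gamma_ne_zero (ne_neg_natCast_of_re_pos hpos)
    have hsign : ((-1 : ℂ) ^ (p + 1)) ^ 2 = 1 := by rw [← pow_mul, mul_comm, pow_mul, neg_one_sq,
      one_pow]
    rw [add_sub_add_right_eq_sub, add_sub_cancel_right, Gamma_add_natCast hc, hΓ]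
    field_simp
    rw [hsign, one_mul]
  · intro n hn
    rw [Nat.descFactorial_of_lt, Nat.cast_zero, mul_zero]
    by_contra! hpn
    exact hn ⟨n - p, Nat.sub_add_cancel hpn⟩

end FallingFactorial

section Newton

/-- The coefficient of `x (x - 1) ⋯ (x - k + 1)` in Newton's forward interpolation of `f`, written
as the alternating sum that defines `Cₖ` in the paper. -/
noncomputable def newtonCoeff (f : ℕ → ℂ) (k : ℕ) : ℂ :=
  (-1) ^ k / k ! * ∑ j ∈ Finset.range (k + 1), poch (-k) j * f j / j !

theorem newtonCoeff_zero (f : ℕ → ℂ) : newtonCoeff f 0 = f 0 := by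
  simp [newtonCoeff, poch_zero]

theorem newtonCoeff_eq_fwdDiff_iter_div_factorial (F : ℂ → ℂ) (k : ℕ) :
    newtonCoeff (fun j => F j) k = Δ_[1] ^[k] F 0 / k ! := by
  rw [newtonCoeff, fwdDiff_iter_eq_sum_shift, div_mul_eq_mul_div, Finset.mul_sum]
  congr 1
  refine Finset.sum_congr rfl fun j hj => ?_
  have hjk : j ≤ k := Nat.lt_succ_iff.1 (Finset.mem_range.1 hj)
  have hfac : (j ! : ℂ) ≠ 0 := Nat.cast_ne_zero.2 j.factorial_ne_zero
  have hsign : (-1 : ℂ) ^ k * (-1) ^ j = (-1) ^ (k - j) := by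
    obtain ⟨i, rfl⟩ := Nat.exists_eq_add_of_le hjk
    rw [Nat.add_sub_cancel_left, pow_add, mul_right_comm, ← mul_pow, neg_one_mul, neg_neg, one_pow,
      one_mul]
  rw [poch_neg_natCast, Nat.descFactorial_eq_factorial_mul_choose, zero_add, nsmul_one,
    zsmul_eq_mul]
  push_cast
  rw [← hsign]
  field_simp

theorem eval_natCast_eq_sum_newtonCoeff {Q : Polynomial ℂ} {m : ℕ} (hQ : Q.natDegree ≤ m) (n : ℕ) :
    Q.eval (n : ℂ) = ∑ k ∈ Finset.range (m + 1),
      newtonCoeff (fun j => Q.eval (j : ℂ)) k * n.descFactorial k := by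
  have hnewton := shift_eq_sum_fwdDiff_iter 1 (fun x => Q.eval x) n 0
  rw [zero_add, nsmul_one] at hnewton
  rw [hnewton]
  refine Finset.sum_congr_of_eq_on_inter (fun k _ hk => ?_) (fun k _ hk => ?_) fun k _ _ => ?_
  · have hdeg : Q.natDegree < k := by rw [Finset.mem_range] at hk; lia
    rw [Polynomial.fwdDiff_iter_eq_zero_of_degree_lt hdeg, Pi.zero_apply, smul_zero]
  · rw [Nat.descFactorial_of_lt (by rw [Finset.mem_range] at hk; lia), Nat.cast_zero, mul_zero]
  · have hfac : (k ! : ℂ) ≠ 0 := Nat.cast_ne_zero.2 k.factorial_ne_zero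
    rw [newtonCoeff_eq_fwdDiff_iter_div_factorial fun x => Q.eval x,
      Nat.descFactorial_eq_factorial_mul_choose, nsmul_eq_mul, Nat.cast_mul]
    field_simp

theorem hasSum_poch_div_poch_mul_eval {a c : ℂ} {Q : Polynomial ℂ} {m : ℕ} (hQ : Q.natDegree ≤ m)
    (hc : ∀ n : ℕ, c ≠ -n) (h : m < (c - a).re) :
    HasSum (fun n : ℕ => poch a (n + 1) / (poch c (n + 1) * (n + 1 : ℕ)) * Q.eval ((n + 1 : ℕ) : ℂ))
      (Q.eval 0 * (digamma c - digamma (c - a)) + ∑ k ∈ Finset.Icc 1 m,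
        (-1) ^ k * poch a k * (k - 1)! * newtonCoeff (fun j => Q.eval (j : ℂ)) k /
          poch (1 + a - c) k) := by
  set C := newtonCoeff fun j => Q.eval (j : ℂ)
  have hnewton (n : ℕ) : Q.eval (n : ℂ) = ∑ k ∈ Finset.range (m + 1), C k * n.descFactorial k :=
    eval_natCast_eq_sum_newtonCoeff hQ n
  have hC0 : C 0 = Q.eval 0 := (newtonCoeff_zero _).trans (by rw [Nat.cast_zero])
  have hlog := (hasSum_digamma_sub_digamma hc (m.cast_nonneg.trans_lt h)).mul_left (Q.eval 0)
  have hfall : HasSum (fun n : ℕ => ∑ p ∈ Finset.range m,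
        C (p + 1) * (poch a (n + 1) / poch c (n + 1) * n.descFactorial p))
      (∑ p ∈ Finset.range m,
        C (p + 1) * ((-1) ^ (p + 1) * poch a (p + 1) * p ! / poch (1 + a - c) (p + 1))) := by
    refine hasSum_sum fun p hp => (hasSum_poch_div_poch_mul_descFactorial hc ?_).mul_left _
    refine lt_of_le_of_lt ?_ h
    exact_mod_cast Finset.mem_range.1 hp
  convert! hlog.add hfall using 1
  · ext n
    rw [hnewton, Finset.sum_range_succ', hC0, Nat.descFactorial_zero, Nat.cast_one, mul_one,
      mul_add, add_comm, mul_comm (Q.eval 0), Finset.mul_sum]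
    congr 1
    refine Finset.sum_congr rfl fun p _ => ?_
    rw [Nat.succ_descFactorial_succ, Nat.cast_mul]
    field_simp
  · rw [← Finset.Ico_add_one_right_eq_Icc, Finset.sum_Ico_eq_sum_range, Nat.add_sub_cancel]
    simp_rw [Nat.add_comm 1, Nat.add_sub_cancel]
    congr 2 with p
    ring

end Newton

section PochhammerRatio

theorem poch_add_natCast_div_poch {d : ℂ} (hd : ∀ n : ℕ, d ≠ -n) (m n : ℕ) :
    poch (d + m) n / poch d n = poch (d + n) m / poch d m := by
  rw [div_eq_div_iff (poch_ne_zero_s17 hd n) (poch_ne_zero_s17 hd m), mul_comm, ← poch_add, add_comm m,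
    poch_add, mul_comm]

theorem exists_polynomial_eval_natCast_eq_prod_poch_div {ι : Type*} [Fintype ι] {d : ι → ℂ}
    (hd : ∀ i, ∀ n : ℕ, d i ≠ -n) (m : ι → ℕ) :
    ∃ Q : Polynomial ℂ, Q.natDegree ≤ ∑ i, m i ∧
      ∀ n : ℕ, Q.eval (n : ℂ) = (∏ i, poch (d i + m i) n) / ∏ i, poch (d i) n := by
  refine ⟨∏ i, .C (poch (d i) (m i))⁻¹ * (ascPochhammer ℂ (m i)).comp (.X + .C (d i)), ?_, ?_⟩
  · refine (Polynomial.natDegree_prod_le _ _).trans (Finset.sum_le_sum fun i _ => ?_)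
    refine (Polynomial.natDegree_C_mul_le _ _).trans (Polynomial.natDegree_comp_le.trans_eq ?_)
    rw [ascPochhammer_natDegree, Polynomial.natDegree_X_add_C, mul_one]
  · intro n
    rw [Polynomial.eval_prod, ← Finset.prod_div_distrib]
    refine Finset.prod_congr rfl fun i _ => ?_
    rw [poch_add_natCast_div_poch (hd i), Polynomial.eval_C_mul, Polynomial.eval_comp,
      Polynomial.eval_add, Polynomial.eval_X, Polynomial.eval_C, add_comm (n : ℂ), div_eq_inv_mul,
      poch.eq_def (d i + n)]

end PochhammerRatio

/-- Theorem 4 of the paper (extension of Ramanujan's Entry 9): for `Re(c-a) > m`,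
`Σ_{k=1}^∞ (a)_k ∏ᵢ(dᵢ+mᵢ)_k / ((c)_k ∏ᵢ(dᵢ)_k k)
  = ψ(c) - ψ(c-a) + Σ_{k=1}^m (-1)^k (a)_k (k-1)! C_k / (1+a-c)_k`. -/
theorem entry9_extension
    (r : ℕ) (hr : 0 < r)
    (mv : Fin r → ℕ) (hmv : ∀ i, 0 < mv i)
    (m : ℕ) (hm : m = ∑ i, mv i)
    (a c : ℂ) (d : Fin r → ℂ)
    (hre : (c - a).re > (m : ℝ))
    (hc : ∀ n : ℕ, c ≠ -(n : ℂ))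
    (hca : ∀ n : ℕ, c - a ≠ -(n : ℂ))
    (hd : ∀ i, ∀ n : ℕ, d i ≠ -(n : ℂ))
    (hac : ∀ k, 1 ≤ k → k ≤ m → poch (1 + a - c) k ≠ 0)
    (C : ℕ → ℂ)
    (hC : ∀ k ≤ m, C k = ((-1 : ℂ) ^ k / (Nat.factorial k : ℂ)) *
      ∑ j ∈ Finset.range (k + 1), poch (-(k : ℂ)) j * (∏ i, poch (d i + (mv i : ℂ)) j) /
        ((∏ i, poch (d i) j) * (Nat.factorial j : ℂ))) :
    ∑' k : ℕ, poch a (k + 1) * (∏ i, poch (d i + (mv i : ℂ)) (k + 1)) /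
        (poch c (k + 1) * (∏ i, poch (d i) (k + 1)) * ((k + 1 : ℕ) : ℂ))
      = digamma c - digamma (c - a) +
        ∑ k ∈ Finset.Icc 1 m,
          (-1 : ℂ) ^ k * poch a k * (Nat.factorial (k - 1) : ℂ) * C k /
            poch (1 + a - c) k := by
  obtain ⟨Q, hdeg, hQ⟩ := exists_polynomial_eval_natCast_eq_prod_poch_div hd mv
  have hQ0 : Q.eval 0 = 1 := by simpa [poch_zero] using hQ 0
  have hCQ : ∀ k ≤ m, C k = newtonCoeff (fun j => Q.eval (j : ℂ)) k := by
    intro k hk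
    simp_rw [hC k hk, newtonCoeff, hQ, mul_div_assoc, div_div]
  have hsum := hasSum_poch_div_poch_mul_eval (hm ▸ hdeg) hc hre
  rw [hQ0, one_mul] at hsum
  convert! hsum.tsum_eq using 1
  · refine tsum_congr fun k => ?_
    rw [hQ]
    ring
  · congr 1
    refine Finset.sum_congr rfl fun k hk => ?_
    rw [hCQ k (Finset.mem_Icc.1 hk).2]
end
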